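/- Suppose the initial strategy p^0 = q_r(s^0) of the CULO model is strictly positive (which holds automatically for finite s^0) and the CULO iterates converge to p̄* ∈ P*. Then supp(p̄*) = K*, where K* = ∪_{p* ∈ P*} supp(p*) is the set of all routes used by at least one UE strategy. -/

import Mathlib

/-!
The proof rests on a conserved quantity. Two user equilibria `p*` and `p̄` induce the same link flow
(`UE_flow_unique`, by strict monotonicity), so `bΛ (p* - p̄) = 0`. Hence every increment of the
valuation, which has the form `Λᵀ v`, is orthogonal to `q ∘ (p* - p̄)`, and
`∑ₖ qₖ (p*ₖ - p̄ₖ) sᵗₖ` does not depend on `t`. The logarithm of the logit map is `-r sₖ` plus a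
term depending only on the OD pair of `k`, which cancels against `p* - p̄`; therefore
`∑ₖ qₖ p*ₖ log pᵗₖ - ∑ₖ qₖ p̄ₖ log pᵗₖ` is constant in `t` as well.

If `pᵗ → p̄`, the second sum converges to `∑ₖ qₖ p̄ₖ log p̄ₖ`, so the first one, whose terms are all
nonpositive, stays bounded. A route with `p*ₖ > 0 = p̄ₖ` would drive the first sum to `-∞`.
-/

open Matrix Filter Finset Topology

noncomputable section

variable {A W K : Type*}

/-- OD-route incidence matrix `Σ`: each column is the standard unit vector at `od k`
(every route `k` serves exactly one OD pair, `od k`). -/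
def Sig [DecidableEq W] (od : K → W) : Matrix W K ℝ :=
  Matrix.of fun w k => if od k = w then 1 else 0

/-- The strategy set `P = {p : p ≥ 0, Σ p = 1}`. -/
def Pset [Fintype K] [DecidableEq W] (od : K → W) : Set (K → ℝ) :=
  {p | (∀ k, 0 ≤ p k) ∧ ∀ w : W, (Sig od).mulVec p w = 1}

/-- `q = Σᵀ d`. -/
def qvec [Fintype W] [DecidableEq W] (od : K → W) (d : W → ℝ) : K → ℝ :=
  (Sig od)ᵀ.mulVec d

/-- `bΛ = Λ · diag q`. -/
def bLam [Fintype K] [Fintype W] [DecidableEq W] [DecidableEq K]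
    (Λ : Matrix A K ℝ) (od : K → W) (d : W → ℝ) : Matrix A K ℝ :=
  Λ * Matrix.diagonal (qvec od d)

/-- The link-flow set `X = {bΛ p : p ∈ P}`. -/
def Xset [Fintype K] [Fintype W] [DecidableEq W] [DecidableEq K]
    (Λ : Matrix A K ℝ) (od : K → W) (d : W → ℝ) : Set (A → ℝ) :=
  (fun p => (bLam Λ od d).mulVec p) '' Pset od

/-- The route-cost map `c(p) = Λᵀ u(bΛ p)`. -/
def routeCost [Fintype A] [Fintype K] [Fintype W] [DecidableEq W] [DecidableEq K]
    (Λ : Matrix A K ℝ) (od : K → W) (d : W → ℝ)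
    (u : (A → ℝ) → (A → ℝ)) : (K → ℝ) → (K → ℝ) :=
  fun p => Λᵀ.mulVec (u ((bLam Λ od d).mulVec p))

/-- The UE set `P*`: solutions of the variational inequality. -/
def UEset [Fintype A] [Fintype K] [Fintype W] [DecidableEq W] [DecidableEq K]
    (Λ : Matrix A K ℝ) (od : K → W) (d : W → ℝ)
    (u : (A → ℝ) → (A → ℝ)) : Set (K → ℝ) :=
  {p | p ∈ Pset od ∧ ∀ p' ∈ Pset od, 0 ≤ routeCost Λ od d u p ⬝ᵥ (p' - p)}

/-- The logit map `q_r`. -/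
def logit [Fintype K] [DecidableEq W] (od : K → W) (r : ℝ) (s : K → ℝ) : K → ℝ :=
  fun k => Real.exp (-r * s k) /
    ∑ k' ∈ Finset.univ.filter (fun k' => od k' = od k), Real.exp (-r * s k')

/-- The negative entropy `φ(p) = ∑ₖ qₖ pₖ log pₖ` (with `0·log 0 = 0`). -/
def negEnt [Fintype K] [Fintype W] [DecidableEq W] (od : K → W) (d : W → ℝ)
    (p : K → ℝ) : ℝ :=
  ∑ k, qvec od d k * (p k * Real.log (p k))

/-- The KL divergence `D(p, p') = ∑ₖ qₖ pₖ (log pₖ − log p'ₖ)` (with `0·log 0 = 0`). -/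
def KLdiv [Fintype K] [Fintype W] [DecidableEq W] (od : K → W) (d : W → ℝ)
    (p p' : K → ℝ) : ℝ :=
  ∑ k, qvec od d k * (p k * (Real.log (p k) - Real.log (p' k)))

theorem qvec_apply [Fintype W] [DecidableEq W] (od : K → W) (d : W → ℝ) (k : K) :
    qvec od d k = d (od k) := by
  simp [qvec, Sig, Matrix.mulVec, dotProduct, Matrix.transpose_apply]

/-- Weights that depend only on the OD pair see a strategy only through its unit mass on each
OD pair. -/
theorem sum_od_mul [Fintype K] [Fintype W] [DecidableEq W] (od : K → W) (f : W → ℝ)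
    {p : K → ℝ} (hp : p ∈ Pset od) : ∑ k, f (od k) * p k = ∑ w, f w := by
  have h : ∀ w, f w = ∑ k, f w * ((if od k = w then 1 else 0) * p k) := by
    intro w
    have := hp.2 w
    simp only [Sig, Matrix.mulVec, dotProduct, Matrix.of_apply] at this
    rw [← Finset.mul_sum, this, mul_one]
  rw [Finset.sum_congr rfl fun w _ => h w, Finset.sum_comm]
  refine Finset.sum_congr rfl fun k _ => ?_
  simp

/-- The adjoint identity `⟨Λᵀ v, q ∘ x⟩ = ⟨v, bΛ x⟩`. -/
theorem sum_weighted_transpose [Fintype A] [Fintype K] [Fintype W] [DecidableEq W] [DecidableEq K]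
    (Λ : Matrix A K ℝ) (od : K → W) (d : W → ℝ) (v : A → ℝ) (x : K → ℝ) :
    ∑ k, qvec od d k * x k * (Λᵀ.mulVec v) k = v ⬝ᵥ (bLam Λ od d).mulVec x := by
  simp only [bLam, Matrix.mulVec, dotProduct, Matrix.transpose_apply, Matrix.mul_diagonal,
    Finset.mul_sum]
  rw [Finset.sum_comm]
  refine Finset.sum_congr rfl fun a _ => Finset.sum_congr rfl fun k _ => ?_
  ring

/-- The variational inequality still holds after weighting each route by its demand, because it
decouples over OD pairs. Equivalently, it is a variational inequality for link flows. -/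
theorem UE_flow_VI [Fintype A] [Fintype K] [Fintype W] [DecidableEq W] [DecidableEq K]
    (Λ : Matrix A K ℝ) (od : K → W) (d : W → ℝ) (hd : ∀ w, 0 < d w)
    (u : (A → ℝ) → (A → ℝ)) {p p' : K → ℝ} (hp : p ∈ UEset Λ od d u) (hp' : p' ∈ Pset od) :
    0 ≤ u ((bLam Λ od d).mulVec p) ⬝ᵥ (bLam Λ od d).mulVec (p' - p) := by
  -- Test strategy: move from `p` towards `p'` by the fraction `l * d (od k) ≤ 1` on route `k`.
  -- The summand `1` keeps the denominator positive even without OD pairs.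
  have hS : 0 ≤ ∑ w, d w := Finset.sum_nonneg fun w _ => (hd w).le
  set l : ℝ := 1 / (1 + ∑ w, d w) with hl
  have hlpos : 0 < l := by positivity
  have hle : ∀ w, l * d w ≤ 1 := by
    intro w
    have h1 : d w ≤ ∑ w, d w := Finset.single_le_sum (fun w _ => (hd w).le) (Finset.mem_univ w)
    rw [hl, one_div_mul_eq_div, div_le_one (by positivity)]
    linarith
  have hmem : (fun k => p k + l * d (od k) * (p' k - p k)) ∈ Pset od := by
    refine ⟨fun k => ?_, fun w => ?_⟩
    · have h1 := mul_nonneg (sub_nonneg.2 (hle (od k))) (hp.1.1 k)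
      have h2 := mul_nonneg (mul_nonneg hlpos.le (hd (od k)).le) (hp'.1 k)
      show 0 ≤ p k + l * d (od k) * (p' k - p k)
      linarith
    · have h1 := hp.1.2 w
      have h2 := hp'.2 w
      simp only [Sig, Matrix.mulVec, dotProduct, Matrix.of_apply] at h1 h2 ⊢
      have h3 : ∀ k, (if od k = w then (1 : ℝ) else 0) * (p k + l * d (od k) * (p' k - p k)) =
          (if od k = w then (1 : ℝ) else 0) * p k +
          l * d w * ((if od k = w then (1 : ℝ) else 0) * p' k -
            (if od k = w then (1 : ℝ) else 0) * p k) := by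
        intro k
        split_ifs with h
        · rw [h]; ring
        · ring
      rw [Finset.sum_congr rfl fun k _ => h3 k, Finset.sum_add_distrib, ← Finset.mul_sum,
        Finset.sum_sub_distrib, h1, h2]
      ring
  have h := hp.2 _ hmem
  have key : routeCost Λ od d u p ⬝ᵥ ((fun k => p k + l * d (od k) * (p' k - p k)) - p) =
      l * (u ((bLam Λ od d).mulVec p) ⬝ᵥ (bLam Λ od d).mulVec (p' - p)) := by
    rw [← sum_weighted_transpose, Finset.mul_sum]
    refine Finset.sum_congr rfl fun k _ => ?_
    simp only [routeCost, qvec_apply, Pi.sub_apply]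
    ring
  rw [key] at h
  exact nonneg_of_mul_nonneg_right h hlpos

theorem UE_flow_unique [Fintype A] [Fintype K] [Fintype W] [DecidableEq W] [DecidableEq K]
    (Λ : Matrix A K ℝ) (od : K → W) (d : W → ℝ) (hd : ∀ w, 0 < d w)
    (u : (A → ℝ) → (A → ℝ))
    (hmono : ∀ x ∈ Xset Λ od d, ∀ x' ∈ Xset Λ od d, x ≠ x' →
      0 < (u x - u x') ⬝ᵥ (x - x'))
    {p p' : K → ℝ} (hp : p ∈ UEset Λ od d u) (hp' : p' ∈ UEset Λ od d u) :
    (bLam Λ od d).mulVec p = (bLam Λ od d).mulVec p' := by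
  by_contra hne
  have h := hmono _ ⟨p, hp.1, rfl⟩ _ ⟨p', hp'.1, rfl⟩ hne
  have h1 := UE_flow_VI Λ od d hd u hp hp'.1
  have h2 := UE_flow_VI Λ od d hd u hp' hp.1
  rw [Matrix.mulVec_sub] at h1 h2
  simp only [sub_dotProduct, dotProduct_sub] at h h1 h2
  linarith

theorem logit_denom_pos [Fintype K] [DecidableEq W] (od : K → W) (r : ℝ) (s : K → ℝ) (k : K) :
    0 < ∑ k' ∈ Finset.univ.filter (fun k' => od k' = od k), Real.exp (-r * s k') :=
  Finset.sum_pos (fun _ _ => Real.exp_pos _) ⟨k, by simp⟩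

theorem logit_pos [Fintype K] [DecidableEq W] (od : K → W) (r : ℝ) (s : K → ℝ) (k : K) :
    0 < logit od r s k :=
  div_pos (Real.exp_pos _) (logit_denom_pos od r s k)

theorem logit_le_one [Fintype K] [DecidableEq W] (od : K → W) (r : ℝ) (s : K → ℝ) (k : K) :
    logit od r s k ≤ 1 := by
  refine (div_le_one (logit_denom_pos od r s k)).2 ?_
  exact Finset.single_le_sum (f := fun k' => Real.exp (-r * s k'))
    (fun _ _ => (Real.exp_pos _).le) (by simp)

theorem log_logit [Fintype K] [DecidableEq W] (od : K → W) (r : ℝ) (s : K → ℝ) (k : K) :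
    Real.log (logit od r s k) = -r * s k -
      Real.log (∑ k' ∈ Finset.univ.filter (fun k' => od k' = od k), Real.exp (-r * s k')) := by
  rw [logit, Real.log_div (Real.exp_pos _).ne' (logit_denom_pos od r s k).ne', Real.log_exp]

/-- Up to the factor `-r`, the log-likelihood difference of two strategies under the logit map is
linear in the valuation: the normalizing constants cancel. -/
theorem sum_log_logit_sub [Fintype K] [Fintype W] [DecidableEq W] (od : K → W) (d : W → ℝ)
    (r : ℝ) (s : K → ℝ) {p p' : K → ℝ} (hp : p ∈ Pset od) (hp' : p' ∈ Pset od) :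
    ∑ k, qvec od d k * p k * Real.log (logit od r s k) -
      ∑ k, qvec od d k * p' k * Real.log (logit od r s k) =
      -r * ∑ k, qvec od d k * (p - p') k * s k := by
  set L : W → ℝ := fun w => d w * Real.log
    (∑ k' ∈ Finset.univ.filter (fun k' => od k' = w), Real.exp (-r * s k')) with hL
  have h : ∑ k, L (od k) * p k = ∑ k, L (od k) * p' k := by
    rw [sum_od_mul od L hp, sum_od_mul od L hp']
  rw [← sub_eq_zero, ← Finset.sum_sub_distrib] at h
  rw [← Finset.sum_sub_distrib, Finset.mul_sum, ← sub_eq_zero, ← Finset.sum_sub_distrib,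
    ← neg_eq_zero, ← h, ← Finset.sum_neg_distrib]
  refine Finset.sum_congr rfl fun k _ => ?_
  simp only [hL, log_logit, qvec_apply, Pi.sub_apply]
  ring

/-- Corollary 3: if the initial strategy `p⁰ = q_r(s⁰)` of the CULO
model is strictly positive (automatic for finite `s⁰`) and the iterates converge to
`p̄* ∈ P*`, then `supp p̄* = K* = ⋃_{p* ∈ P*} supp p*`, the set of all routes used by
at least one UE strategy. -/
theorem statement10
    [Fintype A] [Fintype W] [Fintype K] [DecidableEq W] [DecidableEq K]
    (Λ : Matrix A K ℝ) (od : K → W) (d : W → ℝ)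
    (hΛ : ∀ a k, Λ a k = 0 ∨ Λ a k = 1)
    (hd : ∀ w, 0 < d w)
    (u : (A → ℝ) → (A → ℝ))
    (hu : ContDiffOn ℝ 1 u (Xset Λ od d))
    (hnonneg : ∀ x ∈ Xset Λ od d, ∀ a, 0 ≤ u x a)
    (hmono : ∀ x ∈ Xset Λ od d, ∀ x' ∈ Xset Λ od d, x ≠ x' →
      0 < (u x - u x') ⬝ᵥ (x - x'))
    (r : ℝ) (hr : 0 < r)
    (η : ℕ → ℝ) (hη : ∀ t, 0 < η t)
    (s : ℕ → K → ℝ) (p : ℕ → K → ℝ)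
    (hsdyn : ∀ t, s (t + 1) = s t + η (t + 1) • routeCost Λ od d u (p t))
    (hpdyn : ∀ t, p t = logit od r (s t))
    (hp0pos : ∀ k, 0 < p 0 k)
    (pbar : K → ℝ) (hUE : pbar ∈ UEset Λ od d u)
    (hconv : Tendsto p atTop (nhds pbar)) :
    {k | 0 < pbar k} = {k | ∃ pstar ∈ UEset Λ od d u, 0 < pstar k} := by
  ext k0
  refine ⟨fun h => ⟨pbar, hUE, h⟩, ?_⟩
  rintro ⟨pstar, hstar, hpos⟩
  show 0 < pbar k0
  by_contra hneg
  have hzero : pbar k0 = 0 := le_antisymm (not_lt.1 hneg) (hUE.1.1 k0)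
  have hflow : (bLam Λ od d).mulVec (pstar - pbar) = 0 := by
    rw [Matrix.mulVec_sub, UE_flow_unique Λ od d hd u hmono hstar hUE, sub_self]
  have hconst : ∀ t, ∑ k, qvec od d k * (pstar - pbar) k * s t k =
      ∑ k, qvec od d k * (pstar - pbar) k * s 0 k := by
    intro t
    induction t with
    | zero => rfl
    | succ t ih =>
      have h0 := sum_weighted_transpose Λ od d (u ((bLam Λ od d).mulVec (p t))) (pstar - pbar)
      rw [hflow, dotProduct_zero] at h0
      rw [← ih, hsdyn t, ← add_zero (∑ k, qvec od d k * (pstar - pbar) k * s t k),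
        ← mul_zero (η (t + 1)), ← h0, Finset.mul_sum, ← Finset.sum_add_distrib]
      refine Finset.sum_congr rfl fun k _ => ?_
      simp only [Pi.add_apply, Pi.smul_apply, smul_eq_mul, routeCost]
      ring
  have hpt : ∀ t k, 0 < p t k := fun t k => by rw [hpdyn]; exact logit_pos od r _ k
  have hpt1 : ∀ t k, p t k ≤ 1 := fun t k => by rw [hpdyn]; exact logit_le_one od r _ k
  have hq : ∀ k, 0 < qvec od d k := fun k => by rw [qvec_apply]; exact hd _
  have hdiff : ∀ t, ∑ k, qvec od d k * pstar k * Real.log (p t k) =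
      ∑ k, qvec od d k * pbar k * Real.log (p t k) +
        -r * ∑ k, qvec od d k * (pstar - pbar) k * s 0 k := by
    intro t
    have h := sum_log_logit_sub od d r (s t) hstar.1 hUE.1
    rw [← hpdyn, hconst] at h
    linarith
  have hpk : ∀ k, Tendsto (fun t => p t k) atTop (𝓝 (pbar k)) := fun k =>
    (continuous_apply k).continuousAt.tendsto.comp hconv
  have hlim : Tendsto (fun t => ∑ k, qvec od d k * pbar k * Real.log (p t k)) atTop
      (𝓝 (∑ k, qvec od d k * pbar k * Real.log (pbar k))) := by
    refine tendsto_finsetSum _ fun k _ => ?_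
    by_cases hk : pbar k = 0
    · simp [hk]
    · exact ((hpk k).log hk).const_mul _
  have hbot : Tendsto (fun t => ∑ k, qvec od d k * pstar k * Real.log (p t k)) atTop atBot := by
    have hlog : Tendsto (fun t => Real.log (p t k0)) atTop atBot := by
      refine Real.tendsto_log_nhdsGT_zero.comp (tendsto_nhdsWithin_iff.2 ⟨?_, ?_⟩)
      · simpa [hzero] using hpk k0
      · exact Eventually.of_forall fun t => hpt t k0
    refine tendsto_atBot_mono (fun t => ?_) (hlog.const_mul_atBot (mul_pos (hq k0) hpos))
    rw [← Finset.add_sum_erase _ _ (Finset.mem_univ k0)]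
    have : ∑ k ∈ Finset.univ.erase k0, qvec od d k * pstar k * Real.log (p t k) ≤ 0 :=
      Finset.sum_nonpos fun k _ => mul_nonpos_of_nonneg_of_nonpos
        (mul_nonneg (hq k).le (hstar.1.1 k)) (Real.log_nonpos (hpt t k).le (hpt1 t k))
    linarith
  simp only [hdiff] at hbot
  exact not_tendsto_nhds_of_tendsto_atBot hbot _ (hlim.add_const _)
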